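/- Let X be a finite set, λ ∈ (0,1), and let F₁ ⊊ F₂ ⊆ X and G₁ ⊊ G₂ ⊆ X be sets such that F₁ ∩ G₁ ≠ ∅, F₂ ∩ G₁ ⊄ F₁, F₁ ∩ G₂ ⊄ G₁, and F₂ ∩ G₂ ⊄ F₁ ∪ G₁. Define possibility distributions π_F(x) = 1 if x ∈ F₁, 1−λ if x ∈ F₂∖F₁, 0 otherwise, and π_G(x) = 1 if x ∈ G₁, λ if x ∈ G₂∖G₁, 0 otherwise. Then 𝒫 = 𝒫_{π_F} ∩ 𝒫_{π_G} is nonempty and its lower probability P̲ satisfies P̲(F₁) = λ, P̲(G₁) = 1 − λ, P̲(F₁ ∩ G₁) = 0 and P̲(F₁ ∪ G₁) ≤ max(λ, 1−λ) < 1; consequently P̲(F₁ ∪ G₁) + P̲(F₁ ∩ G₁) < P̲(F₁) + P̲(G₁), so P̲ is not 2-monotone. -/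

import Mathlib

open Finset

attribute [local instance] Classical.propDecidable

variable {X : Type*}

/-- A probability distribution on a finite set `X`. -/
def IsProbDist [Fintype X] (p : X → ℝ) : Prop :=
  (∀ x, 0 ≤ p x ∧ p x ≤ 1) ∧ ∑ x, p x = 1

/-- A cloud on `X`: a pair `(δ, π)` of `[0,1]`-valued maps with `δ ≤ π`,
`π` reaching `1` and `δ` reaching `0`. -/
def IsCloud (δ π : X → ℝ) : Prop :=
  (∀ x, 0 ≤ δ x) ∧ (∀ x, π x ≤ 1) ∧ (∀ x, δ x ≤ π x) ∧ (∃ x, π x = 1) ∧ (∃ y, δ y = 0)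

/-- The credal set of a cloud `(δ, π)`. -/
def credalCloud [Fintype X] (δ π : X → ℝ) : Set (X → ℝ) :=
  {p | IsProbDist p ∧ ∀ α : ℝ, 0 ≤ α → α ≤ 1 →
    (∑ x ∈ univ.filter (fun x => α ≤ δ x), p x) ≤ 1 - α ∧
    1 - α ≤ ∑ x ∈ univ.filter (fun x => α < π x), p x}

/-- A possibility distribution on `X`. -/
def IsPossDist (π : X → ℝ) : Prop :=
  (∀ x, 0 ≤ π x ∧ π x ≤ 1) ∧ ∃ x, π x = 1

/-- The credal set of a possibility distribution. -/
def credalPoss [Fintype X] (π : X → ℝ) : Set (X → ℝ) :=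
  {p | IsProbDist p ∧ ∀ α : ℝ, 0 ≤ α → α ≤ 1 →
    1 - α ≤ ∑ x ∈ univ.filter (fun x => α < π x), p x}


/-- The lower probability of a set of probability distributions on an event. -/
noncomputable def lowProb [Fintype X] (Ps : Set (X → ℝ)) (A : Finset X) : ℝ :=
  sInf ((fun p => ∑ x ∈ A, p x) '' Ps)

/-- The credal set of a three-level possibility distribution is cut out by two constraints. -/
lemma mem_credalPoss_iff_of_nested [Fintype X] {c : ℝ} (hc0 : 0 < c) (hc1 : c < 1)
    {A B : Finset X} (hAB : A ⊆ B) {π : X → ℝ}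
    (hπ : ∀ x, π x = if x ∈ A then 1 else if x ∈ B then c else 0) (p : X → ℝ) :
    p ∈ credalPoss π ↔ IsProbDist p ∧ 1 - c ≤ ∑ x ∈ A, p x ∧ 1 ≤ ∑ x ∈ B, p x := by
  have low : ∀ α : ℝ, 0 ≤ α → α < c → univ.filter (fun x => α < π x) = B := by
    intro α h0 h1
    ext x
    have := @hAB x
    simp only [mem_filter, mem_univ, true_and, hπ]
    split_ifs with hA hB
    · exact ⟨fun _ => this hA, fun _ => by linarith⟩
    · exact ⟨fun _ => hB, fun _ => h1⟩
    · exact ⟨fun h => absurd h (not_lt.mpr h0), fun h => absurd h hB⟩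
  have high : ∀ α : ℝ, c ≤ α → α < 1 → univ.filter (fun x => α < π x) = A := by
    intro α h0 h1
    ext x
    simp only [mem_filter, mem_univ, true_and, hπ]
    split_ifs with hA hB
    · exact ⟨fun _ => hA, fun _ => h1⟩
    · exact ⟨fun h => absurd h (not_lt.mpr h0), fun h => absurd h hA⟩
    · exact ⟨fun h => absurd h (not_lt.mpr (by linarith)), fun h => absurd h hA⟩
  constructor
  · rintro ⟨hp, h⟩
    refine ⟨hp, ?_, ?_⟩
    · simpa only [high c le_rfl hc1] using h c hc0.le hc1.le
    · simpa only [low 0 le_rfl hc0, sub_zero] using h 0 le_rfl zero_le_one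
  · rintro ⟨hp, hA, hB⟩
    refine ⟨hp, fun α h0 h1 => ?_⟩
    rcases lt_or_ge α c with h | h
    · rw [low α h0 h]
      linarith
    rcases h1.lt_or_eq with h' | rfl
    · rw [high α h h']
      linarith
    · rw [sub_self]
      exact sum_nonneg fun x _ => (hp.1 x).1

/-- The distribution with mass `t` at `u` and `1 - t` at `v`. -/
noncomputable def twoPoint (t : ℝ) (u v : X) (x : X) : ℝ :=
  (if x = u then t else 0) + (if x = v then 1 - t else 0)

lemma sum_twoPoint (t : ℝ) (u v : X) (A : Finset X) :
    ∑ x ∈ A, twoPoint t u v x = (if u ∈ A then t else 0) + (if v ∈ A then 1 - t else 0) := by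
  simp only [twoPoint, sum_add_distrib, sum_ite_eq']

lemma isProbDist_twoPoint [Fintype X] {t : ℝ} (h0 : 0 ≤ t) (h1 : t ≤ 1) (u v : X) :
    IsProbDist (twoPoint t u v) := by
  refine ⟨fun x => ?_, by simp [sum_twoPoint]⟩
  unfold twoPoint
  split_ifs <;> constructor <;> linarith

lemma lowProb_eq_of_forall_le [Fintype X] {Ps : Set (X → ℝ)} {A : Finset X} {m : ℝ} {p : X → ℝ}
    (hp : p ∈ Ps) (hpm : ∑ x ∈ A, p x = m) (h : ∀ q ∈ Ps, m ≤ ∑ x ∈ A, q x) :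
    lowProb Ps A = m :=
  IsLeast.csInf_eq ⟨⟨p, hp, hpm⟩, by rintro _ ⟨q, hq, rfl⟩; exact h q hq⟩

lemma lowProb_le [Fintype X] {Ps : Set (X → ℝ)} (hPs : ∀ q ∈ Ps, IsProbDist q) (A : Finset X)
    {p : X → ℝ} (hp : p ∈ Ps) : lowProb Ps A ≤ ∑ x ∈ A, p x :=
  csInf_le ⟨0, by rintro _ ⟨q, hq, rfl⟩; exact sum_nonneg fun x _ => ((hPs q hq).1 x).1⟩
    ⟨p, hp, rfl⟩

/-- for the two possibility distributions built from nested pairs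
`F₁ ⊊ F₂` and `G₁ ⊊ G₂` with masses `λ` and `1 - λ` exchanged, the intersection
of their credal sets is nonempty, and its lower probability takes the values
`λ`, `1 - λ`, `0` on `F₁`, `G₁`, `F₁ ∩ G₁` and is at most `max λ (1 - λ) < 1`
on `F₁ ∪ G₁`; consequently it is not 2-monotone. -/
theorem pair_of_possibilities_not_two_monotone [Fintype X]
    (lam : ℝ) (hlam0 : 0 < lam) (hlam1 : lam < 1)
    (F₁ F₂ G₁ G₂ : Finset X) (hF : F₁ ⊂ F₂) (hG : G₁ ⊂ G₂)
    (hFG : (F₁ ∩ G₁).Nonempty)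
    (h1 : ¬ (F₂ ∩ G₁ ⊆ F₁)) (h2 : ¬ (F₁ ∩ G₂ ⊆ G₁))
    (h3 : ¬ (F₂ ∩ G₂ ⊆ F₁ ∪ G₁))
    (πF πG : X → ℝ)
    (hπF : ∀ x, πF x = if x ∈ F₁ then 1 else if x ∈ F₂ then 1 - lam else 0)
    (hπG : ∀ x, πG x = if x ∈ G₁ then 1 else if x ∈ G₂ then lam else 0) :
    (credalPoss πF ∩ credalPoss πG).Nonempty ∧
    lowProb (credalPoss πF ∩ credalPoss πG) F₁ = lam ∧
    lowProb (credalPoss πF ∩ credalPoss πG) G₁ = 1 - lam ∧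
    lowProb (credalPoss πF ∩ credalPoss πG) (F₁ ∩ G₁) = 0 ∧
    lowProb (credalPoss πF ∩ credalPoss πG) (F₁ ∪ G₁) ≤ max lam (1 - lam) ∧
    max lam (1 - lam) < 1 ∧
    lowProb (credalPoss πF ∩ credalPoss πG) (F₁ ∪ G₁) +
        lowProb (credalPoss πF ∩ credalPoss πG) (F₁ ∩ G₁) <
      lowProb (credalPoss πF ∩ credalPoss πG) F₁ +
        lowProb (credalPoss πF ∩ credalPoss πG) G₁ := by
  obtain ⟨a, ha⟩ := hFG
  obtain ⟨b, hb, hbF⟩ := not_subset.mp h1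
  obtain ⟨c, hc, hcG⟩ := not_subset.mp h2
  obtain ⟨d, hd, hdFG⟩ := not_subset.mp h3
  simp only [mem_inter, mem_union, not_or] at ha hb hc hd hdFG
  have memF := mem_credalPoss_iff_of_nested (by linarith) (by linarith) hF.1 hπF
  have memG := mem_credalPoss_iff_of_nested hlam0 hlam1 hG.1 hπG
  have hmax : max lam (1 - lam) < 1 := max_lt hlam1 (by linarith)
  have hmax0 : 0 ≤ max lam (1 - lam) := hlam0.le.trans (le_max_left _ _)
  have hcb : twoPoint lam c b ∈ credalPoss πF ∩ credalPoss πG := by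
    have hp := isProbDist_twoPoint hlam0.le hlam1.le c b
    refine ⟨(memF _).2 ⟨hp, ?_, ?_⟩, (memG _).2 ⟨hp, ?_, ?_⟩⟩ <;>
      simp [sum_twoPoint, hb, hc, hbF, hcG, hF.1 hc.1, hG.1 hb.2]
  have had : twoPoint (max lam (1 - lam)) a d ∈ credalPoss πF ∩ credalPoss πG := by
    have hp := isProbDist_twoPoint hmax0 hmax.le a d
    refine ⟨(memF _).2 ⟨hp, ?_, ?_⟩, (memG _).2 ⟨hp, ?_, ?_⟩⟩ <;>
      simp [sum_twoPoint, ha, hd, hdFG, hF.1 ha.1, hG.1 ha.2]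
  have hF₁ : lowProb (credalPoss πF ∩ credalPoss πG) F₁ = lam :=
    lowProb_eq_of_forall_le hcb (by simp [sum_twoPoint, hc, hbF])
      fun q hq => by linarith [((memF q).1 hq.1).2.1]
  have hG₁ : lowProb (credalPoss πF ∩ credalPoss πG) G₁ = 1 - lam :=
    lowProb_eq_of_forall_le hcb (by simp [sum_twoPoint, hb, hcG])
      fun q hq => ((memG q).1 hq.2).2.1
  have hinter : lowProb (credalPoss πF ∩ credalPoss πG) (F₁ ∩ G₁) = 0 :=
    lowProb_eq_of_forall_le hcb (by simp [sum_twoPoint, hbF, hcG])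
      fun q hq => sum_nonneg fun x _ => (hq.1.1.1 x).1
  have hunion : lowProb (credalPoss πF ∩ credalPoss πG) (F₁ ∪ G₁) ≤ max lam (1 - lam) :=
    (lowProb_le (fun q hq => hq.1.1) _ had).trans_eq (by simp [sum_twoPoint, ha, hdFG])
  exact ⟨⟨_, hcb⟩, hF₁, hG₁, hinter, hunion, hmax, by linarith⟩
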